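/- For every ε ∈ (0,1) and C_U > 0 there exist κ > 0 and a constant A > 0 such that: (i) for every η > 0 there is x₀ with ∑_{U/(z·(log₂x)²) ≤ m < U/z} |R_m^{(M)}| ≤ η·C_U·x/log x for all x ≥ x₀ and all M ≤ κ·x^{1/5}; and (ii) for all x large enough and all M ≤ κ·x^{1/5}, ∑_{1 ≤ m < U/(z·(log₂x)²)} |R_m^{(M)}| ≤ A·C_U·x/log x. Both sums are over integers m in the stated ranges. -/

import Mathlib

open scoped Classical

/-- `y = exp((1−ε)·log x·log₃x/log₂x)`. -/
noncomputable def yy (ε x : ℝ) : ℝ :=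
  Real.exp ((1 - ε) * Real.log x * Real.log^[3] x / Real.log^[2] x)

/-- `z = x/log₂ x`. -/
noncomputable def zz (x : ℝ) : ℝ := x / Real.log^[2] x

/-- `U = C_U·(φ(M)/M)·x·log y/log₂ x`. -/
noncomputable def UU (CU : ℝ) (M : ℕ) (ε x : ℝ) : ℝ :=
  CU * ((M.totient : ℝ) / (M : ℝ)) * x * Real.log (yy ε x) / Real.log^[2] x

/-- `P_M(t) = ∏_{p ≤ t, p ∤ M} p`. -/
noncomputable def PM (M : ℕ) (t : ℝ) : ℕ :=
  ∏ p ∈ (Finset.range (⌊t⌋₊ + 1)).filter (fun p : ℕ => p.Prime ∧ ¬ p ∣ M), p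

/-- `R_m^{(M)} = {p prime : z < p ≤ U/m, gcd(mp − 1, P_M(y)) = 1}`. -/
noncomputable def RmM (CU ε x : ℝ) (M m : ℕ) : Finset ℕ :=
  (Finset.range (⌊UU CU M ε x / (m : ℝ)⌋₊ + 1)).filter (fun p : ℕ =>
    p.Prime ∧ zz x < (p : ℝ) ∧ Nat.gcd (m * p - 1) (PM M (yy ε x)) = 1)

/-!
For each `m`, the primes `p ≤ U/m` counted by `R_m^{(M)}` avoid the class `0` and, for every
odd prime modulus `q ≤ y` with `q ∤ mM`, also the class `m⁻¹`. An upper bound sieve of dimension `2`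
up to `y` and of dimension `1` beyond gives, up to a small error,
`|R_m| ≪ (U/m) · (ψ(mM)/(mM)) / (log x · log y)`, with `ψ(k)/k = ∏_{p ∣ k} (1 + 1/p)`.

The factor `(φ(M)/M) · log y` of `U` absorbs `ψ(M)/M` and `log y`, so `|R_m|` is at most a constant
times `C_U · x / (log x · log₂ x) · ψ(m)/m²`. Since `∑ ψ(m)/m²` over `a ≤ m < b` is
`≪ 1 + log (b/a)`, the upper range, where `b/a = (log₂ x)²`, saves a factor `log₃ x / log₂ x`, and
the lower range, where `log b ≪ log₂ x`, saves nothing.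
-/

section PeriodicSums

open Finset Function

variable {R : Type*} [CommSemiring R]

lemma sum_range_mul_of_periodic {a b : ℕ} (hab : a.Coprime b) {g h : ℕ → R}
    (hg : Periodic g a) (hh : Periodic h b) :
    ∑ n ∈ range (a * b), g n * h n = (∑ n ∈ range a, g n) * ∑ n ∈ range b, h n := by
  rw [sum_mul_sum, ← sum_product']
  have hmaps : Set.MapsTo (fun n ↦ (n % a, n % b)) (range (a * b) : Set ℕ)
      (range a ×ˢ range b : Finset (ℕ × ℕ)) := by
    intro n hn
    have hpos : 0 < a * b := Nat.zero_lt_of_lt (mem_range.1 hn)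
    simp [Nat.mod_lt _ (Nat.pos_of_mul_pos_right hpos),
      Nat.mod_lt _ (Nat.pos_of_mul_pos_left hpos)]
  have hinj : Set.InjOn (fun n ↦ (n % a, n % b)) (range (a * b) : Set ℕ) := by
    intro n hn n' hn' h
    obtain ⟨ha, hb⟩ := Prod.mk.inj h
    exact ((Nat.modEq_and_modEq_iff_modEq_mul hab).1 ⟨ha, hb⟩).eq_of_lt_of_lt
      (mem_range.1 hn) (mem_range.1 hn')
  refine sum_nbij _ hmaps hinj (surjOn_of_injOn_of_card_le _ hmaps hinj (by simp)) fun n _ ↦ ?_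
  rw [hg.map_mod_nat, hh.map_mod_nat]

lemma periodic_prod_of_subset {S T : Finset ℕ} (hST : S ⊆ T) {g : ℕ → ℕ → R}
    (hg : ∀ p ∈ S, Periodic (g p) p) :
    Periodic (fun n ↦ ∏ p ∈ S, g p n) (∏ p ∈ T, p) := by
  refine fun n ↦ prod_congr rfl fun p hp ↦ ?_
  obtain ⟨c, hc⟩ := dvd_prod_of_mem (fun q : ℕ ↦ q) (hST hp)
  rw [hc, mul_comm]
  exact (hg p hp).nat_mul c n

lemma sum_range_prod_of_periodic {S : Finset ℕ} (hS : (S : Set ℕ).Pairwise Nat.Coprime)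
    {g : ℕ → ℕ → R} (hg : ∀ p ∈ S, Periodic (g p) p) :
    ∑ n ∈ range (∏ p ∈ S, p), ∏ p ∈ S, g p n = ∏ p ∈ S, ∑ n ∈ range p, g p n := by
  induction S using Finset.induction_on with
  | empty => simp
  | insert p S hp ih =>
    rw [coe_insert, Set.pairwise_insert_of_symm_of_notMem hp] at hS
    rw [forall_mem_insert] at hg
    simp_rw [prod_insert hp]
    rw [← ih hS.1 hg.2]
    exact sum_range_mul_of_periodic (Nat.Coprime.prod_right hS.2) hg.1
      (periodic_prod_of_subset Subset.rfl hg.2)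

lemma sum_range_mul_add_of_periodic {q : ℕ} {F : ℕ → R} (hF : Periodic F q) (k r : ℕ) :
    ∑ n ∈ range (q * k + r), F n = k * ∑ n ∈ range q, F n + ∑ n ∈ range r, F n := by
  induction k with
  | zero => simp
  | succ k ih =>
    rw [show q * (k + 1) + r = q + (q * k + r) by ring, sum_range_add]
    simp_rw [add_comm q, hF _]
    rw [ih]
    push_cast
    ring

lemma abs_sum_range_sub_mean_le_of_periodic {q : ℕ} (hq : 0 < q) {F : ℕ → ℝ} {C : ℝ}
    (hF : Periodic F q) (hC : ∀ n, |F n| ≤ C) (N : ℕ) :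
    |∑ n ∈ range N, F n - N * ((∑ n ∈ range q, F n) / q)| ≤ 2 * C * q := by
  have hq' : (0 : ℝ) < q := mod_cast hq
  have hC0 : 0 ≤ C := (abs_nonneg _).trans (hC 0)
  have hrange (k : ℕ) : |∑ n ∈ range k, F n| ≤ k * C := by
    simpa using (abs_sum_le_sum_abs F (range k)).trans
      (sum_le_card_nsmul (range k) _ C fun n _ ↦ hC n)
  have hrq : ((N % q : ℕ) : ℝ) ≤ q := mod_cast (Nat.mod_lt N hq).le
  have hsplit : ∑ n ∈ range N, F n - N * ((∑ n ∈ range q, F n) / q) =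
      ∑ n ∈ range (N % q), F n - (N % q : ℕ) / q * ∑ n ∈ range q, F n := by
    have hN : (N : ℝ) = q * (N / q : ℕ) + (N % q : ℕ) := mod_cast (Nat.div_add_mod N q).symm
    nth_rewrite 1 [← Nat.div_add_mod N q]
    rw [sum_range_mul_add_of_periodic hF, hN]
    field_simp
    ring
  calc |∑ n ∈ range N, F n - N * ((∑ n ∈ range q, F n) / q)|
      ≤ |∑ n ∈ range (N % q), F n| + |(N % q : ℕ) / q * ∑ n ∈ range q, F n| := by
        rw [hsplit]
        exact abs_sub _ _
    _ = |∑ n ∈ range (N % q), F n| + (N % q : ℕ) / q * |∑ n ∈ range q, F n| := by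
        rw [abs_mul, abs_of_nonneg (by positivity : (0 : ℝ) ≤ (N % q : ℕ) / q)]
    _ ≤ q * C + 1 * (q * C) := by
        gcongr
        · exact (hrange _).trans (by gcongr)
        · exact div_le_one_of_le₀ hrq hq'.le
        · exact hrange q
    _ = 2 * C * q := by ring

lemma sum_range_prod_mul_prod_of_mean_zero {S T : Finset ℕ}
    (hST : ((S ∪ T : Finset ℕ) : Set ℕ).Pairwise Nat.Coprime) {f : ℕ → ℕ → R} {v : ℕ → R}
    (hf : ∀ p ∈ S ∪ T, Periodic (f p) p) (hmean : ∀ p ∈ S ∪ T, ∑ n ∈ range p, f p n = 0)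
    (hsq : ∀ p ∈ S ∪ T, ∑ n ∈ range p, f p n ^ 2 = p * v p) :
    ∑ n ∈ range (∏ p ∈ S ∪ T, p), (∏ p ∈ S, f p n) * ∏ p ∈ T, f p n =
      (∏ p ∈ S ∪ T, p : ℕ) * if S = T then ∏ p ∈ S, v p else 0 := by
  set g : ℕ → ℕ → R := fun p n ↦ (if p ∈ S then f p n else 1) * if p ∈ T then f p n else 1 with hg
  have hprod (n : ℕ) : (∏ p ∈ S, f p n) * ∏ p ∈ T, f p n = ∏ p ∈ S ∪ T, g p n := by
    rw [hg, prod_mul_distrib, prod_ite_mem, prod_ite_mem, union_inter_cancel_left,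
      union_inter_cancel_right]
  have hgper : ∀ p ∈ S ∪ T, Periodic (g p) p := fun p hp n ↦ by simp only [hg, hf p hp n]
  simp_rw [hprod]
  rw [sum_range_prod_of_periodic hST hgper]
  split_ifs with h
  · subst h
    rw [union_idempotent, Nat.cast_prod, ← prod_mul_distrib]
    refine prod_congr rfl fun p hp ↦ ?_
    simp only [hg, hp, if_true, ← sq, hsq p (mem_union_left _ hp)]
  · obtain ⟨p, hp⟩ : (symmDiff S T).Nonempty := by
      rwa [nonempty_iff_ne_empty, ← bot_eq_empty, Ne, symmDiff_eq_bot]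
    have hpST : p ∈ S ∪ T := (symmDiff_le_sup : symmDiff S T ≤ S ⊔ T) hp
    rw [mul_zero, prod_eq_zero hpST]
    rw [← hmean p hpST]
    refine sum_congr rfl fun n _ ↦ ?_
    rcases mem_symmDiff.1 hp with ⟨hS, hT⟩ | ⟨hT, hS⟩ <;> simp [hg, hS, hT]

end PeriodicSums

section Sieve

open Finset Function

/-- The squarefree integers in `[1, Q]`: the moduli of the sieve of level `Q`. -/
def squarefreeUpTo (Q : ℕ) : Finset ℕ := {l ∈ Icc 1 Q | Squarefree l}

lemma mem_squarefreeUpTo {Q l : ℕ} : l ∈ squarefreeUpTo Q ↔ (1 ≤ l ∧ l ≤ Q) ∧ Squarefree l := by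
  simp [squarefreeUpTo]

lemma card_squarefreeUpTo_le (Q : ℕ) : #(squarefreeUpTo Q) ≤ Q :=
  (card_filter_le _ _).trans (by simp)

lemma prod_primeFactors_of_mem_squarefreeUpTo {Q l : ℕ} (hl : l ∈ squarefreeUpTo Q) :
    ∏ p ∈ l.primeFactors, p = l :=
  Nat.prod_primeFactors_of_squarefree (mem_squarefreeUpTo.1 hl).2

lemma primeFactors_eq_iff_of_mem_squarefreeUpTo {Q l l' : ℕ} (hl : l ∈ squarefreeUpTo Q)
    (hl' : l' ∈ squarefreeUpTo Q) : l.primeFactors = l'.primeFactors ↔ l = l' := by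
  refine ⟨fun h ↦ ?_, congrArg _⟩
  rw [← prod_primeFactors_of_mem_squarefreeUpTo hl, h, prod_primeFactors_of_mem_squarefreeUpTo hl']

lemma sum_range_ite_natCast_mem {p : ℕ} [NeZero p] (s : Finset (ZMod p)) (a b : ℝ) :
    ∑ n ∈ range p, (if (n : ZMod p) ∈ s then a else b) = #s * a + (p - #s) * b := by
  have hsum : ∑ n ∈ range p, (if (n : ZMod p) ∈ s then a else b) =
      ∑ c : ZMod p, if c ∈ s then a else b :=
    sum_nbij' (fun n ↦ (n : ZMod p)) ZMod.val (by simp) (by simp [ZMod.val_lt])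
      (fun n hn ↦ ZMod.val_cast_of_lt (mem_range.1 hn)) (by simp) (by simp)
  have hcompl : (#{c | c ∉ s} : ℝ) = p - #s := by
    rw [show ({c | c ∉ s} : Finset (ZMod p)) = sᶜ by ext; simp, card_compl, ZMod.card, Nat.cast_sub]
    simpa using card_le_univ s
  rw [hsum, sum_ite, sum_const, sum_const, nsmul_eq_mul, nsmul_eq_mul, hcompl, filter_mem_eq_inter,
    univ_inter]

variable (Ω : (p : ℕ) → Finset (ZMod p))

/-- The weight `h(p) = ω(p) / (p - ω(p))` of the Selberg sieve removing, for each prime `p`, the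
`ω(p)` residue classes in `Ω p`. -/
noncomputable def sieveWeight (p : ℕ) : ℝ := #(Ω p) / (p - #(Ω p))

/-- The quantity `L = ∑ μ²(l) h(l)`, over `l ≤ Q`, by which the sieve of level `Q` gains. -/
noncomputable def sieveMass (Q : ℕ) : ℝ :=
  ∑ l ∈ squarefreeUpTo Q, ∏ p ∈ l.primeFactors, sieveWeight Ω p

/-- The function of `n` modulo `p` equal to `-1` on the classes removed by the sieve, and to the
constant making its mean zero elsewhere. -/
noncomputable def balancedFactor (p n : ℕ) : ℝ :=
  if (n : ZMod p) ∈ Ω p then -1 else sieveWeight Ω p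

lemma periodic_balancedFactor (p : ℕ) : Periodic (balancedFactor Ω p) p :=
  fun n ↦ by simp [balancedFactor]

variable {Ω}

lemma sieveWeight_nonneg {p : ℕ} (hp : #(Ω p) < p) : 0 ≤ sieveWeight Ω p :=
  div_nonneg (Nat.cast_nonneg _) (sub_nonneg.2 (mod_cast hp.le))

lemma sum_range_balancedFactor {p : ℕ} (hp : #(Ω p) < p) :
    ∑ n ∈ range p, balancedFactor Ω p n = 0 := by
  have : NeZero p := ⟨by lia⟩
  have hne : (p : ℝ) - #(Ω p) ≠ 0 := sub_ne_zero.2 (mod_cast hp.ne')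
  simp only [balancedFactor, sum_range_ite_natCast_mem, sieveWeight]
  field_simp
  ring

lemma sum_range_balancedFactor_sq {p : ℕ} (hp : #(Ω p) < p) :
    ∑ n ∈ range p, balancedFactor Ω p n ^ 2 = p * sieveWeight Ω p := by
  have : NeZero p := ⟨by lia⟩
  have hne : (p : ℝ) - #(Ω p) ≠ 0 := sub_ne_zero.2 (mod_cast hp.ne')
  simp only [balancedFactor, ite_pow, sum_range_ite_natCast_mem, sieveWeight]
  field_simp
  ring

lemma abs_balancedFactor_le {p : ℕ} (hp : #(Ω p) < p) (n : ℕ) : |balancedFactor Ω p n| ≤ p := by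
  have hgap : (1 : ℝ) ≤ p - #(Ω p) := by
    rw [le_sub_iff_add_le']
    exact_mod_cast hp
  unfold balancedFactor
  split_ifs
  · rw [abs_neg, abs_one]
    exact_mod_cast Nat.one_le_of_lt hp
  · rw [abs_of_nonneg (sieveWeight_nonneg hp)]
    exact (div_le_self (Nat.cast_nonneg _) hgap).trans (mod_cast hp.le)

lemma abs_prod_balancedFactor_le (hΩ : ∀ p, p.Prime → #(Ω p) < p) {Q l : ℕ}
    (hl : l ∈ squarefreeUpTo Q) (n : ℕ) : |∏ p ∈ l.primeFactors, balancedFactor Ω p n| ≤ Q := by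
  calc |∏ p ∈ l.primeFactors, balancedFactor Ω p n|
      ≤ ∏ p ∈ l.primeFactors, (p : ℝ) := by
        rw [abs_prod]
        exact prod_le_prod (fun _ _ ↦ abs_nonneg _) fun p hp ↦
          abs_balancedFactor_le (hΩ p (Nat.prime_of_mem_primeFactors hp)) n
    _ = l := by rw [← Nat.cast_prod, prod_primeFactors_of_mem_squarefreeUpTo hl]
    _ ≤ Q := mod_cast (mem_squarefreeUpTo.1 hl).1.2

lemma prod_primeFactors_union_le {Q l l' : ℕ} (hl : l ∈ squarefreeUpTo Q)
    (hl' : l' ∈ squarefreeUpTo Q) : ∏ p ∈ l.primeFactors ∪ l'.primeFactors, p ≤ Q ^ 2 := by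
  have hinter : 1 ≤ ∏ p ∈ l.primeFactors ∩ l'.primeFactors, p :=
    Nat.one_le_iff_ne_zero.2 (prod_ne_zero_iff.2 fun p hp ↦
      (Nat.prime_of_mem_primeFactors (mem_inter.1 hp).1).ne_zero)
  calc ∏ p ∈ l.primeFactors ∪ l'.primeFactors, p
      ≤ (∏ p ∈ l.primeFactors ∪ l'.primeFactors, p) * ∏ p ∈ l.primeFactors ∩ l'.primeFactors, p :=
        Nat.le_mul_of_pos_right _ hinter
    _ = l * l' := by
        rw [prod_union_inter, prod_primeFactors_of_mem_squarefreeUpTo hl,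
          prod_primeFactors_of_mem_squarefreeUpTo hl']
    _ ≤ Q ^ 2 := by
        rw [sq]
        exact Nat.mul_le_mul (mem_squarefreeUpTo.1 hl).1.2 (mem_squarefreeUpTo.1 hl').1.2

lemma sum_range_prod_balancedFactor_mul_le (hΩ : ∀ p, p.Prime → #(Ω p) < p) {Q l l' : ℕ}
    (hl : l ∈ squarefreeUpTo Q) (hl' : l' ∈ squarefreeUpTo Q) (N : ℕ) :
    ∑ n ∈ range N, (∏ p ∈ l.primeFactors, balancedFactor Ω p n) *
        ∏ p ∈ l'.primeFactors, balancedFactor Ω p n ≤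
      (if l = l' then N * ∏ p ∈ l.primeFactors, sieveWeight Ω p else 0) + 2 * (Q : ℝ) ^ 4 := by
  set S := l.primeFactors
  set T := l'.primeFactors
  set q := ∏ p ∈ S ∪ T, p
  have hprime : ∀ p ∈ S ∪ T, p.Prime := fun p hp ↦
    (mem_union.1 hp).elim Nat.prime_of_mem_primeFactors Nat.prime_of_mem_primeFactors
  have hq : 0 < q := Nat.pos_of_ne_zero (prod_ne_zero_iff.2 fun p hp ↦ (hprime p hp).ne_zero)
  have hST : S = T ↔ l = l' := primeFactors_eq_iff_of_mem_squarefreeUpTo hl hl'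
  have hperiod : Periodic
      (fun n ↦ (∏ p ∈ S, balancedFactor Ω p n) * ∏ p ∈ T, balancedFactor Ω p n) q :=
    (periodic_prod_of_subset subset_union_left fun p _ ↦ periodic_balancedFactor Ω p).mul
      (periodic_prod_of_subset subset_union_right fun p _ ↦ periodic_balancedFactor Ω p)
  have horth := sum_range_prod_mul_prod_of_mean_zero (S := S) (T := T)
    (fun p hp p' hp' ↦ (Nat.coprime_primes (hprime p hp) (hprime p' hp')).2)
    (fun p _ ↦ periodic_balancedFactor Ω p)
    (fun p hp ↦ sum_range_balancedFactor (hΩ p (hprime p hp)))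
    fun p hp ↦ sum_range_balancedFactor_sq (hΩ p (hprime p hp))
  have hbound (n : ℕ) :
      |(∏ p ∈ S, balancedFactor Ω p n) * ∏ p ∈ T, balancedFactor Ω p n| ≤ (Q : ℝ) * Q := by
    rw [abs_mul]
    gcongr
    exacts [abs_prod_balancedFactor_le hΩ hl n, abs_prod_balancedFactor_le hΩ hl' n]
  have herror := (abs_le.1 (abs_sum_range_sub_mean_le_of_periodic hq hperiod hbound N)).2
  have hqQ : 2 * ((Q : ℝ) * Q) * q ≤ 2 * ((Q : ℝ) * Q) * Q ^ 2 := by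
    gcongr
    exact_mod_cast prod_primeFactors_union_le hl hl'
  rw [horth, mul_div_cancel_left₀ _ (Nat.cast_ne_zero.2 hq.ne'), mul_ite, mul_zero] at herror
  simp only [hST] at herror
  linarith

/-- The dual (large sieve) form of Selberg's sieve: the sum over `l` of products of balanced factors
is constantly `L` on the sifted set, while its mean square is nearly `L` by orthogonality. -/
lemma card_mul_sieveMass_sq_le (hΩ : ∀ p, p.Prime → #(Ω p) < p) {Q N : ℕ} {A : Finset ℕ}
    (hAN : ∀ n ∈ A, n < N) (hA : ∀ n ∈ A, ∀ p, p.Prime → p ≤ Q → (n : ZMod p) ∉ Ω p) :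
    #A * sieveMass Ω Q ^ 2 ≤ N * sieveMass Ω Q + 2 * (Q : ℝ) ^ 6 := by
  set F : ℕ → ℝ := fun n ↦ ∑ l ∈ squarefreeUpTo Q, ∏ p ∈ l.primeFactors, balancedFactor Ω p n
  have hF : ∀ n ∈ A, F n = sieveMass Ω Q := fun n hn ↦
    sum_congr rfl fun l hl ↦ prod_congr rfl fun p hp ↦ by
      have hpQ : p ≤ Q := (Nat.le_of_mem_primeFactors hp).trans (mem_squarefreeUpTo.1 hl).1.2
      exact if_neg (hA n hn p (Nat.prime_of_mem_primeFactors hp) hpQ)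
  have hcard : (#(squarefreeUpTo Q) : ℝ) ≤ Q := mod_cast card_squarefreeUpTo_le Q
  calc #A * sieveMass Ω Q ^ 2
      = ∑ n ∈ A, F n ^ 2 := by
        rw [sum_congr rfl fun n hn ↦ by rw [hF n hn], sum_const, nsmul_eq_mul]
    _ ≤ ∑ n ∈ range N, F n ^ 2 :=
        sum_le_sum_of_subset_of_nonneg (fun n hn ↦ mem_range.2 (hAN n hn)) fun _ _ _ ↦ sq_nonneg _
    _ = ∑ l ∈ squarefreeUpTo Q, ∑ l' ∈ squarefreeUpTo Q, ∑ n ∈ range N,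
          (∏ p ∈ l.primeFactors, balancedFactor Ω p n) *
            ∏ p ∈ l'.primeFactors, balancedFactor Ω p n := by
        simp_rw [F, sq, sum_mul_sum]
        rw [sum_comm]
        exact sum_congr rfl fun l _ ↦ sum_comm
    _ ≤ ∑ l ∈ squarefreeUpTo Q, ∑ l' ∈ squarefreeUpTo Q,
          ((if l = l' then N * ∏ p ∈ l.primeFactors, sieveWeight Ω p else 0) +
            2 * (Q : ℝ) ^ 4) :=
        sum_le_sum fun l hl ↦ sum_le_sum fun l' hl' ↦
          sum_range_prod_balancedFactor_mul_le hΩ hl hl' N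
    _ = N * sieveMass Ω Q + #(squarefreeUpTo Q) * (#(squarefreeUpTo Q) * (2 * (Q : ℝ) ^ 4)) := by
        simp_rw [sum_add_distrib, sum_ite_eq, sum_const, nsmul_eq_mul]
        rw [sum_congr rfl fun l hl ↦ if_pos hl, sieveMass, mul_sum]
    _ ≤ N * sieveMass Ω Q + Q * (Q * (2 * (Q : ℝ) ^ 4)) := by gcongr
    _ = N * sieveMass Ω Q + 2 * (Q : ℝ) ^ 6 := by ring

end Sieve

section ReciprocalSums

open Finset

lemma sum_le_sum_of_injOn {ι κ : Type*} {s : Finset ι} {t : Finset κ} {f : ι → ℝ} {g : κ → ℝ}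
    (e : ι → κ) (he : ∀ i ∈ s, e i ∈ t) (hinj : Set.InjOn e s) (hfg : ∀ i ∈ s, f i ≤ g (e i))
    (hg : ∀ k ∈ t, 0 ≤ g k) : ∑ i ∈ s, f i ≤ ∑ k ∈ t, g k :=
  calc ∑ i ∈ s, f i ≤ ∑ i ∈ s, g (e i) := sum_le_sum hfg
    _ = ∑ k ∈ s.image e, g k := (sum_image hinj).symm
    _ ≤ ∑ k ∈ t, g k :=
        sum_le_sum_of_subset_of_nonneg (image_subset_iff.2 he) fun k hk _ ↦ hg k hk

lemma inv_cast_eq_inv_mul_inv_div {d n : ℕ} (h : d ∣ n) :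
    (n : ℝ)⁻¹ = (d : ℝ)⁻¹ * ((n / d : ℕ) : ℝ)⁻¹ := by
  rw [← mul_inv, ← Nat.cast_mul, Nat.mul_div_cancel' h]

lemma sum_inv_sq_le_two (S : Finset ℕ) : ∑ s ∈ S, ((s : ℝ) ^ 2)⁻¹ ≤ 2 := by
  calc ∑ s ∈ S, ((s : ℝ) ^ 2)⁻¹ = ∑ s ∈ S.erase 0, ((s : ℝ) ^ 2)⁻¹ := (sum_erase _ (by simp)).symm
    _ ≤ ∑ s ∈ Ioo 0 (S.sup id + 1), ((s : ℝ) ^ 2)⁻¹ := by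
        refine sum_le_sum_of_subset_of_nonneg (fun s hs ↦ ?_) fun _ _ _ ↦ by positivity
        have hle : s ≤ S.sup id := le_sup (f := id) (mem_of_mem_erase hs)
        exact mem_Ioo.2 ⟨Nat.pos_of_ne_zero (ne_of_mem_erase hs), by lia⟩
    _ ≤ 2 := by simpa using sum_Ioo_inv_sq_le (α := ℝ) 0 (S.sup id + 1)

/-- The ratio `ψ(k) / k = ∏_{p ∣ k} (1 + 1/p)`, where `ψ` is Dedekind's function. -/
noncomputable def dedekindPsiRatio (k : ℕ) : ℝ := ∏ p ∈ k.primeFactors, (1 + (p : ℝ)⁻¹)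

lemma dedekindPsiRatio_pos (k : ℕ) : 0 < dedekindPsiRatio k := prod_pos fun p _ ↦ by positivity

lemma dedekindPsiRatio_mul_le {a b : ℕ} (ha : a ≠ 0) (hb : b ≠ 0) :
    dedekindPsiRatio (a * b) ≤ dedekindPsiRatio a * dedekindPsiRatio b := by
  simp only [dedekindPsiRatio]
  rw [Nat.primeFactors_mul ha hb, ← prod_union_inter]
  exact le_mul_of_one_le_right (prod_nonneg fun p _ ↦ by positivity)
    (one_le_prod fun p _ ↦ le_add_of_nonneg_right (by positivity))

lemma dedekindPsiRatio_two : dedekindPsiRatio 2 = 3 / 2 := by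
  rw [dedekindPsiRatio, Nat.prime_two.primeFactors]
  norm_num

lemma dedekindPsiRatio_mul_totient_div_le_one (k : ℕ) :
    dedekindPsiRatio k * (k.totient / k) ≤ 1 := by
  rcases eq_or_ne k 0 with rfl | hk
  · simp
  have htotient : (k.totient : ℝ) = k * ∏ p ∈ k.primeFactors, (1 - (p : ℝ)⁻¹) := by
    simpa using congrArg (Rat.cast (K := ℝ)) (Nat.totient_eq_mul_prod_factors k)
  rw [htotient, mul_div_cancel_left₀ _ (Nat.cast_ne_zero.2 hk), dedekindPsiRatio,
    ← prod_mul_distrib]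
  refine prod_le_one (fun p _ ↦ ?_) fun p _ ↦ ?_
  · exact mul_nonneg (by positivity) (sub_nonneg.2 (Nat.cast_inv_le_one p))
  · nlinarith [sq_nonneg (p : ℝ)⁻¹]

lemma dedekindPsiRatio_eq_sum_divisors {k : ℕ} (hk : k ≠ 0) :
    dedekindPsiRatio k = ∑ d ∈ k.divisors with Squarefree d, (d : ℝ)⁻¹ := by
  have hfactors : (UniqueFactorizationMonoid.normalizedFactors k).toFinset = k.primeFactors := by
    ext p
    simp [Nat.factors_eq]
  rw [Nat.sum_divisors_filter_squarefree hk, hfactors, dedekindPsiRatio, prod_one_add]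
  refine sum_congr rfl fun S _ ↦ ?_
  rw [prod_val, Nat.cast_prod, prod_inv_distrib]
  simp

lemma log_add_one_le_two_mul_sum_inv_squarefree (K : ℕ) :
    Real.log (K + 1) ≤ 2 * ∑ a ∈ squarefreeUpTo K, (a : ℝ)⁻¹ := by
  choose u v huv hu using Nat.sq_mul_squarefree
  have hpair : ∀ n ∈ Icc 1 K, (v n, u n) ∈ Icc 1 K ×ˢ squarefreeUpTo K := by
    intro n hn
    rw [mem_Icc] at hn
    have hv : v n ≠ 0 := by
      intro h
      have := huv n
      simp only [h, ne_eq, OfNat.ofNat_ne_zero, not_false_eq_true, zero_pow, zero_mul] at this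
      lia
    have hun : u n ≤ n := Nat.le_of_dvd hn.1 (Dvd.intro_left _ (huv n))
    have hvn : v n ≤ n := Nat.le_of_dvd hn.1 ((dvd_pow_self _ two_ne_zero).trans ⟨_, (huv n).symm⟩)
    have hu0 : u n ≠ 0 := (hu n).ne_zero
    simp only [mem_product, mem_Icc, mem_squarefreeUpTo]
    exact ⟨by lia, by lia, hu n⟩
  calc Real.log (K + 1) ≤ ∑ n ∈ Icc 1 K, (n : ℝ)⁻¹ := by
        simpa [harmonic_eq_sum_Icc] using log_add_one_le_harmonic K
    _ ≤ ∑ q ∈ Icc 1 K ×ˢ squarefreeUpTo K, ((q.1 : ℝ) ^ 2)⁻¹ * (q.2 : ℝ)⁻¹ := by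
        refine sum_le_sum_of_injOn (fun n ↦ (v n, u n)) hpair (fun n _ n' _ h ↦ ?_) (fun n _ ↦ ?_)
          fun q _ ↦ by positivity
        · obtain ⟨hv, hu⟩ := Prod.mk.inj h
          rw [← huv n, ← huv n', hv, hu]
        · rw [← mul_inv]
          exact_mod_cast (congrArg (fun j : ℕ ↦ (j : ℝ)⁻¹) (huv n)).ge
    _ = (∑ s ∈ Icc 1 K, ((s : ℝ) ^ 2)⁻¹) * ∑ a ∈ squarefreeUpTo K, (a : ℝ)⁻¹ := by
        rw [sum_product, sum_mul_sum]
    _ ≤ 2 * ∑ a ∈ squarefreeUpTo K, (a : ℝ)⁻¹ := by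
        gcongr
        exact sum_inv_sq_le_two _

lemma sum_inv_squarefree_le_dedekindPsiRatio_mul (K : ℕ) {k : ℕ} (hk : k ≠ 0) :
    ∑ a ∈ squarefreeUpTo K, (a : ℝ)⁻¹ ≤
      dedekindPsiRatio k * ∑ a ∈ squarefreeUpTo K with a.Coprime k, (a : ℝ)⁻¹ := by
  have hsplit (n : ℕ) : n.gcd k * (n / n.gcd k) = n := Nat.mul_div_cancel' (Nat.gcd_dvd_left n k)
  rw [dedekindPsiRatio_eq_sum_divisors hk, sum_mul_sum, ← sum_product']
  refine sum_le_sum_of_injOn (fun n ↦ (n.gcd k, n / n.gcd k)) (fun n hn ↦ ?_) (fun n _ n' _ h ↦ ?_)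
    (fun n _ ↦ ?_) fun q _ ↦ by positivity
  · obtain ⟨⟨hn1, hnK⟩, hsq⟩ := mem_squarefreeUpTo.1 hn
    have hdiv : n / n.gcd k ∣ n := Nat.div_dvd_of_dvd (Nat.gcd_dvd_left n k)
    have hcop : (n.gcd k).Coprime (n / n.gcd k) :=
      Nat.coprime_of_squarefree_mul ((hsplit n).symm ▸ hsq)
    simp only [mem_product, mem_filter, Nat.mem_divisors, mem_squarefreeUpTo]
    refine ⟨⟨⟨Nat.gcd_dvd_right n k, hk⟩, hsq.squarefree_of_dvd (Nat.gcd_dvd_left n k)⟩,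
      ⟨⟨Nat.pos_of_dvd_of_pos hdiv hn1, (Nat.div_le_self _ _).trans hnK⟩,
        hsq.squarefree_of_dvd hdiv⟩, ?_⟩
    exact Nat.coprime_of_dvd fun p hp hpn hpk ↦
      Nat.not_coprime_of_dvd_of_dvd hp.one_lt (Nat.dvd_gcd (hpn.trans hdiv) hpk) hpn hcop
  · obtain ⟨hgcd, hquot⟩ := Prod.mk.inj h
    rw [← hsplit n, hquot, hgcd, hsplit]
  · exact (inv_cast_eq_inv_mul_inv_div (Nat.gcd_dvd_left n k)).le

lemma div_gcd_pair_injective :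
    Function.Injective fun q : ℕ × ℕ ↦ (q.1.gcd q.2, q.1 / q.1.gcd q.2, q.2 / q.1.gcd q.2) := by
  intro q q' h
  obtain ⟨hgcd, hquot₁, hquot₂⟩ : q.1.gcd q.2 = q'.1.gcd q'.2 ∧
      q.1 / q.1.gcd q.2 = q'.1 / q'.1.gcd q'.2 ∧ q.2 / q.1.gcd q.2 = q'.2 / q'.1.gcd q'.2 := by
    simpa only [Prod.mk.injEq] using h
  ext
  · rw [← Nat.mul_div_cancel' (Nat.gcd_dvd_left q.1 q.2), hquot₁, hgcd,
      Nat.mul_div_cancel' (Nat.gcd_dvd_left q'.1 q'.2)]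
  · rw [← Nat.mul_div_cancel' (Nat.gcd_dvd_right q.1 q.2), hquot₂, hgcd,
      Nat.mul_div_cancel' (Nat.gcd_dvd_right q'.1 q'.2)]

lemma sum_inv_mul_sum_inv_le_two_mul_sum_coprime {S T : Finset ℕ} (hS0 : 0 ∉ S) (hT0 : 0 ∉ T)
    (hS : ∀ a ∈ S, a.divisors ⊆ S) (hT : ∀ b ∈ T, b.divisors ⊆ T) :
    (∑ a ∈ S, (a : ℝ)⁻¹) * ∑ b ∈ T, (b : ℝ)⁻¹ ≤
      2 * ∑ q ∈ S ×ˢ T with q.1.Coprime q.2, (q.1 : ℝ)⁻¹ * (q.2 : ℝ)⁻¹ := by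
  set P := {q ∈ S ×ˢ T | q.1.Coprime q.2}
  calc (∑ a ∈ S, (a : ℝ)⁻¹) * ∑ b ∈ T, (b : ℝ)⁻¹
      = ∑ q ∈ S ×ˢ T, (q.1 : ℝ)⁻¹ * (q.2 : ℝ)⁻¹ := by rw [sum_mul_sum, ← sum_product']
    _ ≤ ∑ r ∈ S ×ˢ P, ((r.1 : ℝ) ^ 2)⁻¹ * ((r.2.1 : ℝ)⁻¹ * (r.2.2 : ℝ)⁻¹) := by
        refine sum_le_sum_of_injOn
          (fun q ↦ (q.1.gcd q.2, q.1 / q.1.gcd q.2, q.2 / q.1.gcd q.2))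
          (fun q hq ↦ ?_) div_gcd_pair_injective.injOn (fun q _ ↦ ?_) fun r _ ↦ by positivity
        · obtain ⟨ha, hb⟩ := mem_product.1 hq
          have ha0 : q.1 ≠ 0 := ne_of_mem_of_not_mem ha hS0
          have hb0 : q.2 ≠ 0 := ne_of_mem_of_not_mem hb hT0
          have hmemS {d : ℕ} (hd : d ∣ q.1) : d ∈ S := hS _ ha (Nat.mem_divisors.2 ⟨hd, ha0⟩)
          have hmemT {d : ℕ} (hd : d ∣ q.2) : d ∈ T := hT _ hb (Nat.mem_divisors.2 ⟨hd, hb0⟩)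
          exact mem_product.2 ⟨hmemS (Nat.gcd_dvd_left _ _), mem_filter.2 ⟨mem_product.2
            ⟨hmemS ⟨_, (Nat.div_mul_cancel (Nat.gcd_dvd_left _ _)).symm⟩,
              hmemT ⟨_, (Nat.div_mul_cancel (Nat.gcd_dvd_right _ _)).symm⟩⟩,
            Nat.coprime_div_gcd_div_gcd (Nat.gcd_pos_of_pos_left _ (Nat.pos_of_ne_zero ha0))⟩⟩
        · rw [inv_cast_eq_inv_mul_inv_div (Nat.gcd_dvd_left q.1 q.2),
            inv_cast_eq_inv_mul_inv_div (Nat.gcd_dvd_right q.1 q.2)]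
          exact le_of_eq (by ring)
    _ = (∑ s ∈ S, ((s : ℝ) ^ 2)⁻¹) * ∑ q ∈ P, (q.1 : ℝ)⁻¹ * (q.2 : ℝ)⁻¹ := by
        rw [sum_product, sum_mul_sum]
    _ ≤ 2 * ∑ q ∈ P, (q.1 : ℝ)⁻¹ * (q.2 : ℝ)⁻¹ := by
        gcongr
        exact sum_inv_sq_le_two S

end ReciprocalSums

section SieveMass

open Finset

lemma card_le_prod_primeFactors_of_forall_dvd {w : ℕ → ℕ} {l : ℕ} (hl : l ≠ 0)
    (hw : ∀ p ∈ l.primeFactors, 1 ≤ w p) {B : Finset ℕ} (hsq : ∀ b ∈ B, Squarefree b)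
    (hdvd : ∀ b ∈ B, b ∣ l) (hB : ∀ b ∈ B, ∀ p ∈ b.primeFactors, 2 ≤ w p) :
    #B ≤ ∏ p ∈ l.primeFactors, w p :=
  calc #B ≤ #(powerset {p ∈ l.primeFactors | 2 ≤ w p}) := by
        refine card_le_card_of_injOn Nat.primeFactors (fun b hb ↦ ?_) fun b hb b' hb' h ↦ ?_
        · exact mem_powerset.2 fun p hp ↦
            mem_filter.2 ⟨Nat.primeFactors_mono (hdvd b hb) hl hp, hB b hb p hp⟩
        · rw [← Nat.prod_primeFactors_of_squarefree (hsq b hb), h,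
            Nat.prod_primeFactors_of_squarefree (hsq b' hb')]
    _ = ∏ p ∈ l.primeFactors with 2 ≤ w p, 2 := by rw [card_powerset, prod_const]
    _ ≤ ∏ p ∈ l.primeFactors with 2 ≤ w p, w p := prod_le_prod' fun p hp ↦ (mem_filter.1 hp).2
    _ ≤ ∏ p ∈ l.primeFactors, w p :=
        prod_le_prod_of_subset_of_one_le' (filter_subset _ _) fun p hp _ ↦ hw p hp

lemma card_le_prod_primeFactors_of_forall_mul_eq {w : ℕ → ℕ} {l : ℕ} (hl : l ≠ 0)
    (hw : ∀ p ∈ l.primeFactors, 1 ≤ w p) {P : Finset (ℕ × ℕ)} (hP : ∀ q ∈ P, q.1 * q.2 = l)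
    (hsq : ∀ q ∈ P, Squarefree q.2) (hw2 : ∀ q ∈ P, ∀ p ∈ q.2.primeFactors, 2 ≤ w p) :
    #P ≤ ∏ p ∈ l.primeFactors, w p := by
  have hinj : Set.InjOn Prod.snd (P : Set (ℕ × ℕ)) := fun q hq q' hq' h ↦ by
    have heq : q.1 * q.2 = q'.1 * q.2 := (hP q hq).trans (h ▸ (hP q' hq').symm)
    exact Prod.ext (Nat.eq_of_mul_eq_mul_right (hsq q hq).ne_zero.bot_lt heq) h
  rw [← card_image_of_injOn hinj]
  exact card_le_prod_primeFactors_of_forall_dvd hl hw (forall_mem_image.2 hsq)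
    (forall_mem_image.2 fun q hq ↦ ⟨q.1, by rw [mul_comm, hP q hq]⟩) (forall_mem_image.2 hw2)

variable {Ω : (p : ℕ) → Finset (ZMod p)}

lemma prod_card_mul_inv_le_prod_sieveWeight (hΩ : ∀ p, p.Prime → #(Ω p) < p) {l : ℕ}
    (hl : Squarefree l) :
    (∏ p ∈ l.primeFactors, #(Ω p) : ℕ) * (l : ℝ)⁻¹ ≤ ∏ p ∈ l.primeFactors, sieveWeight Ω p := by
  calc (∏ p ∈ l.primeFactors, #(Ω p) : ℕ) * (l : ℝ)⁻¹
      = ∏ p ∈ l.primeFactors, (#(Ω p) / p : ℝ) := by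
        rw [prod_div_distrib, ← Nat.cast_prod, ← Nat.cast_prod,
          Nat.prod_primeFactors_of_squarefree hl, div_eq_mul_inv]
    _ ≤ ∏ p ∈ l.primeFactors, sieveWeight Ω p := by
        refine prod_le_prod (fun p _ ↦ by positivity) fun p hp ↦ ?_
        have hlt : (#(Ω p) : ℝ) < p := mod_cast hΩ p (Nat.prime_of_mem_primeFactors hp)
        exact div_le_div_of_nonneg_left (by positivity) (by linarith)
          (sub_le_self _ (by positivity))

lemma sum_inv_coprime_le_sieveMass (hΩ1 : ∀ p, p.Prime → 1 ≤ #(Ω p))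
    (hΩ : ∀ p, p.Prime → #(Ω p) < p) {K K' : ℕ} {S T : Finset ℕ} (hS : S ⊆ squarefreeUpTo K)
    (hT : T ⊆ squarefreeUpTo K') (hΩ2 : ∀ b ∈ T, ∀ p ∈ b.primeFactors, 2 ≤ #(Ω p)) :
    ∑ q ∈ S ×ˢ T with q.1.Coprime q.2, (q.1 : ℝ)⁻¹ * (q.2 : ℝ)⁻¹ ≤ sieveMass Ω (K * K') := by
  have hmaps : ∀ q ∈ {q ∈ S ×ˢ T | q.1.Coprime q.2}, q.1 * q.2 ∈ squarefreeUpTo (K * K') := by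
    intro q hq
    obtain ⟨hq, hcop⟩ := mem_filter.1 hq
    obtain ⟨⟨ha1, haK⟩, hasq⟩ := mem_squarefreeUpTo.1 (hS (mem_product.1 hq).1)
    obtain ⟨⟨hb1, hbK⟩, hbsq⟩ := mem_squarefreeUpTo.1 (hT (mem_product.1 hq).2)
    exact mem_squarefreeUpTo.2
      ⟨⟨Nat.mul_pos ha1 hb1, Nat.mul_le_mul haK hbK⟩, (Nat.squarefree_mul hcop).2 ⟨hasq, hbsq⟩⟩
  rw [← sum_fiberwise_of_maps_to hmaps, sieveMass]
  refine sum_le_sum fun l hl ↦ ?_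
  obtain ⟨⟨hl1, -⟩, hlsq⟩ := mem_squarefreeUpTo.1 hl
  set fiber := {q ∈ {q ∈ S ×ˢ T | q.1.Coprime q.2} | q.1 * q.2 = l}
  have hfiber {q : ℕ × ℕ} (hq : q ∈ fiber) : q.2 ∈ T ∧ q.1 * q.2 = l := by
    simp only [fiber, mem_filter, mem_product] at hq
    exact ⟨hq.1.1.2, hq.2⟩
  have hcard : #fiber ≤ ∏ p ∈ l.primeFactors, #(Ω p) :=
    card_le_prod_primeFactors_of_forall_mul_eq (by lia)
      (fun p hp ↦ hΩ1 p (Nat.prime_of_mem_primeFactors hp)) (fun _ hq ↦ (hfiber hq).2)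
      (fun _ hq ↦ (mem_squarefreeUpTo.1 (hT (hfiber hq).1)).2) fun _ hq ↦ hΩ2 _ (hfiber hq).1
  calc ∑ q ∈ fiber, (q.1 : ℝ)⁻¹ * (q.2 : ℝ)⁻¹ = #fiber * (l : ℝ)⁻¹ := by
        rw [← nsmul_eq_mul, ← sum_const]
        refine sum_congr rfl fun q hq ↦ ?_
        rw [← (hfiber hq).2, Nat.cast_mul, mul_inv]
    _ ≤ (∏ p ∈ l.primeFactors, #(Ω p) : ℕ) * (l : ℝ)⁻¹ := by gcongr
    _ ≤ ∏ p ∈ l.primeFactors, sieveWeight Ω p := prod_card_mul_inv_le_prod_sieveWeight hΩ hlsq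

lemma divisors_subset_squarefreeUpTo {K a : ℕ} (ha : a ∈ squarefreeUpTo K) :
    a.divisors ⊆ squarefreeUpTo K := fun d hd ↦ by
  obtain ⟨⟨ha1, haK⟩, hsq⟩ := mem_squarefreeUpTo.1 ha
  obtain ⟨hd, -⟩ := Nat.mem_divisors.1 hd
  exact mem_squarefreeUpTo.2 ⟨⟨Nat.pos_of_dvd_of_pos hd ha1, (Nat.le_of_dvd ha1 hd).trans haK⟩,
    hsq.squarefree_of_dvd hd⟩

lemma log_mul_log_le_mul_sieveMass (hΩ1 : ∀ p, p.Prime → 1 ≤ #(Ω p))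
    (hΩ : ∀ p, p.Prime → #(Ω p) < p) (K : ℕ) {K' k : ℕ} (hk : k ≠ 0)
    (hΩ2 : ∀ p, p.Prime → p ≤ K' → ¬p ∣ k → 2 ≤ #(Ω p)) :
    Real.log (K + 1) * Real.log (K' + 1) ≤ 8 * dedekindPsiRatio k * sieveMass Ω (K * K') := by
  set S := squarefreeUpTo K
  set T := {b ∈ squarefreeUpTo K' | b.Coprime k}
  have hzero {J : ℕ} : 0 ∉ squarefreeUpTo J := fun h ↦ by simp [mem_squarefreeUpTo] at h
  have hTdiv : ∀ b ∈ T, b.divisors ⊆ T := fun b hb d hd ↦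
    mem_filter.2 ⟨divisors_subset_squarefreeUpTo (mem_filter.1 hb).1 hd,
      (mem_filter.1 hb).2.coprime_dvd_left (Nat.dvd_of_mem_divisors hd)⟩
  have hT2 : ∀ b ∈ T, ∀ p ∈ b.primeFactors, 2 ≤ #(Ω p) := fun b hb p hp ↦ by
    obtain ⟨hb, hcop⟩ := mem_filter.1 hb
    refine hΩ2 p (Nat.prime_of_mem_primeFactors hp)
      ((Nat.le_of_mem_primeFactors hp).trans (mem_squarefreeUpTo.1 hb).1.2) fun hpk ↦ ?_
    exact Nat.not_coprime_of_dvd_of_dvd (Nat.prime_of_mem_primeFactors hp).one_lt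
      (Nat.dvd_of_mem_primeFactors hp) hpk hcop
  have hpsi := (dedekindPsiRatio_pos k).le
  calc Real.log (K + 1) * Real.log (K' + 1)
      ≤ (2 * ∑ a ∈ S, (a : ℝ)⁻¹) * (2 * (dedekindPsiRatio k * ∑ b ∈ T, (b : ℝ)⁻¹)) := by
        gcongr
        · exact Real.log_nonneg (by simp)
        · exact log_add_one_le_two_mul_sum_inv_squarefree K
        · exact (log_add_one_le_two_mul_sum_inv_squarefree K').trans
            (by gcongr; exact sum_inv_squarefree_le_dedekindPsiRatio_mul K' hk)
    _ = 4 * dedekindPsiRatio k * ((∑ a ∈ S, (a : ℝ)⁻¹) * ∑ b ∈ T, (b : ℝ)⁻¹) := by ring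
    _ ≤ 4 * dedekindPsiRatio k * (2 * sieveMass Ω (K * K')) := by
        refine mul_le_mul_of_nonneg_left ((sum_inv_mul_sum_inv_le_two_mul_sum_coprime hzero
          (fun h ↦ hzero (mem_filter.1 h).1) (fun a ↦ divisors_subset_squarefreeUpTo) hTdiv).trans
          ?_) (by positivity)
        gcongr
        exact sum_inv_coprime_le_sieveMass hΩ1 hΩ Subset.rfl (filter_subset _ _) hT2
    _ = 8 * dedekindPsiRatio k * sieveMass Ω (K * K') := by ring

lemma one_le_sieveMass (hΩ : ∀ p, p.Prime → #(Ω p) < p) {Q : ℕ} (hQ : 1 ≤ Q) :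
    1 ≤ sieveMass Ω Q := by
  have hone : 1 ∈ squarefreeUpTo Q := mem_squarefreeUpTo.2 ⟨⟨le_rfl, hQ⟩, squarefree_one⟩
  simpa [sieveMass] using single_le_sum (f := fun l ↦ ∏ p ∈ l.primeFactors, sieveWeight Ω p)
    (fun l _ ↦ prod_nonneg fun p hp ↦
      sieveWeight_nonneg (hΩ p (Nat.prime_of_mem_primeFactors hp))) hone

end SieveMass

section PsiRatioSums

open Finset

lemma sum_Icc_inv_le {u v : ℕ} (hu : 1 ≤ u) (huv : u ≤ v) :
    ∑ m ∈ Icc u v, (m : ℝ)⁻¹ ≤ 1 + Real.log v - Real.log u := by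
  induction v, huv using Nat.le_induction with
  | base => simpa using Nat.cast_inv_le_one u
  | succ v huv ih =>
    have hv : (0 : ℝ) < v := by exact_mod_cast hu.trans huv
    have hstep : ((v + 1 : ℕ) : ℝ)⁻¹ ≤ Real.log (v + 1 : ℕ) - Real.log v := by
      rw [← Real.log_div (by positivity) hv.ne']
      refine le_trans (le_of_eq ?_) (Real.one_sub_inv_le_log_of_pos (by positivity))
      push_cast
      field_simp
      ring
    rw [sum_Icc_succ_top (by lia)]
    linarith

variable {I : Finset ℕ} {a b : ℝ}

lemma sum_inv_le_one_add_log_div (ha : 0 < a) (hab : a ≤ b)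
    (hI : ∀ m ∈ I, a ≤ m ∧ (m : ℝ) < b) : ∑ m ∈ I, (m : ℝ)⁻¹ ≤ 1 + Real.log (b / a) := by
  rcases I.eq_empty_or_nonempty with rfl | hne
  · simpa using add_nonneg zero_le_one (Real.log_nonneg ((one_le_div ha).2 hab))
  obtain ⟨hau, -⟩ := hI _ (I.min'_mem hne)
  obtain ⟨hav, hvb⟩ := hI _ (I.max'_mem hne)
  have hu : 1 ≤ I.min' hne := Nat.cast_pos.1 (ha.trans_le hau)
  calc ∑ m ∈ I, (m : ℝ)⁻¹ ≤ ∑ m ∈ Icc (I.min' hne) (I.max' hne), (m : ℝ)⁻¹ :=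
        sum_le_sum_of_subset_of_nonneg
          (fun m hm ↦ mem_Icc.2 ⟨I.min'_le m hm, I.le_max' m hm⟩) fun _ _ _ ↦ by positivity
    _ ≤ 1 + Real.log (I.max' hne) - Real.log (I.min' hne) :=
        sum_Icc_inv_le hu (I.min'_le_max' hne)
    _ ≤ 1 + Real.log b - Real.log a := by
        gcongr
        exact ha.trans_le hav
    _ = 1 + Real.log (b / a) := by
        rw [Real.log_div (ha.trans_le hab).ne' ha.ne']
        ring

lemma sum_inv_filter_dvd_le (ha : 0 < a) (hab : a ≤ b) (hI : ∀ m ∈ I, a ≤ m ∧ (m : ℝ) < b)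
    {d : ℕ} (hd : 1 ≤ d) :
    ∑ m ∈ I with d ∣ m, (m : ℝ)⁻¹ ≤ (d : ℝ)⁻¹ * (1 + Real.log (b / a)) := by
  have hd' : (0 : ℝ) < d := mod_cast hd
  have hinj : Set.InjOn (fun m ↦ m / d) ({m ∈ I | d ∣ m} : Finset ℕ) := fun m hm n hn h ↦ by
    rw [← Nat.mul_div_cancel' (mem_filter.1 hm).2, (show m / d = n / d from h),
      Nat.mul_div_cancel' (mem_filter.1 hn).2]
  calc ∑ m ∈ I with d ∣ m, (m : ℝ)⁻¹
      = (d : ℝ)⁻¹ * ∑ j ∈ {m ∈ I | d ∣ m}.image (· / d), (j : ℝ)⁻¹ := by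
        rw [sum_image hinj, mul_sum]
        exact sum_congr rfl fun m hm ↦ inv_cast_eq_inv_mul_inv_div (mem_filter.1 hm).2
    _ ≤ (d : ℝ)⁻¹ * (1 + Real.log ((b / d) / (a / d))) := by
        gcongr
        refine sum_inv_le_one_add_log_div (by positivity) (by gcongr) (forall_mem_image.2 ?_)
        intro m hm
        obtain ⟨hm, hdm⟩ := mem_filter.1 hm
        rw [Nat.cast_div hdm hd'.ne']
        exact ⟨div_le_div_of_nonneg_right (hI m hm).1 hd'.le,
          div_lt_div_of_pos_right (hI m hm).2 hd'⟩
    _ = (d : ℝ)⁻¹ * (1 + Real.log (b / a)) := by rw [div_div_div_cancel_right₀ hd'.ne']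

lemma sum_dedekindPsiRatio_div_le (ha : 0 < a) (hab : a ≤ b)
    (hI : ∀ m ∈ I, a ≤ m ∧ (m : ℝ) < b) :
    ∑ m ∈ I, dedekindPsiRatio m / m ≤ 2 * (1 + Real.log (b / a)) := by
  have hlog : 0 ≤ Real.log (b / a) := Real.log_nonneg ((one_le_div ha).2 hab)
  have hpos : ∀ m ∈ I, 0 < m := fun m hm ↦ Nat.cast_pos.1 (ha.trans_le (hI m hm).1)
  calc ∑ m ∈ I, dedekindPsiRatio m / m
      ≤ ∑ m ∈ I, ∑ d ∈ m.divisors, (d : ℝ)⁻¹ * (m : ℝ)⁻¹ := by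
        refine sum_le_sum fun m hm ↦ ?_
        rw [div_eq_mul_inv, ← sum_mul, dedekindPsiRatio_eq_sum_divisors (hpos m hm).ne']
        gcongr
        exact filter_subset _ _
    _ = ∑ d ∈ Icc 1 ⌊b⌋₊, ∑ m ∈ I with d ∣ m, (d : ℝ)⁻¹ * (m : ℝ)⁻¹ := by
        refine sum_comm' fun m d ↦ ?_
        simp only [Nat.mem_divisors, mem_filter, mem_Icc]
        refine ⟨fun ⟨hm, hdm, _⟩ ↦ ?_, fun ⟨⟨hm, hdm⟩, _⟩ ↦ ⟨hm, hdm, (hpos m hm).ne'⟩⟩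
        exact ⟨⟨hm, hdm⟩, Nat.pos_of_dvd_of_pos hdm (hpos m hm),
          (Nat.le_of_dvd (hpos m hm) hdm).trans (Nat.le_floor (hI m hm).2.le)⟩
    _ ≤ ∑ d ∈ Icc 1 ⌊b⌋₊, ((d : ℝ) ^ 2)⁻¹ * (1 + Real.log (b / a)) := by
        refine sum_le_sum fun d hd ↦ ?_
        rw [← mul_sum, sq, mul_inv, mul_assoc]
        gcongr
        exact sum_inv_filter_dvd_le ha hab hI (mem_Icc.1 hd).1
    _ ≤ 2 * (1 + Real.log (b / a)) := by
        rw [← sum_mul]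
        gcongr
        exact sum_inv_sq_le_two _

end PsiRatioSums

section SiftedPrimes

open Finset

/-- The residue classes modulo `p` that a prime `n > p` cannot occupy if no prime `p ≤ K'` prime to
`M` divides `m * n - 1`: the class `0`, and `1/m` for those `p`. The primes dividing `2 * m` are
left out of the second condition, so that `0 ≠ 1/m` and a class always survives. -/
def forbiddenClasses (m M K' p : ℕ) : Finset (ZMod p) :=
  if p ≤ K' ∧ ¬p ∣ 2 * m * M then {0, (m : ZMod p)⁻¹} else {0}

variable {m M K K' : ℕ}

lemma one_le_card_forbiddenClasses (p : ℕ) : 1 ≤ #(forbiddenClasses m M K' p) := by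
  rw [one_le_card, forbiddenClasses]
  split_ifs <;> simp

lemma card_forbiddenClasses_lt {p : ℕ} (hp : p.Prime) : #(forbiddenClasses m M K' p) < p := by
  rw [forbiddenClasses]
  split_ifs with h
  · have hp2 : p ≠ 2 := by
      rintro rfl
      exact h.2 (by simp [mul_assoc])
    exact card_le_two.trans_lt (lt_of_le_of_ne hp.two_le hp2.symm)
  · simpa using hp.one_lt

lemma two_le_card_forbiddenClasses {p : ℕ} (hp : p.Prime) (hpK : p ≤ K') (hpk : ¬p ∣ 2 * m * M) :
    2 ≤ #(forbiddenClasses m M K' p) := by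
  have : Fact p.Prime := ⟨hp⟩
  have hm : (m : ZMod p) ≠ 0 := fun h ↦
    hpk (((ZMod.natCast_eq_zero_iff m p).1 h).mul_left 2 |>.mul_right M)
  rw [forbiddenClasses, if_pos ⟨hpK, hpk⟩, card_pair (inv_ne_zero hm).symm]

lemma natCast_notMem_forbiddenClasses {n p : ℕ} (hm : m ≠ 0) (hn : n.Prime) (hp : p.Prime)
    (hpn : p < n) (hsift : p ≤ K' → ¬p ∣ M → ¬p ∣ m * n - 1) :
    (n : ZMod p) ∉ forbiddenClasses m M K' p := by
  have : Fact p.Prime := ⟨hp⟩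
  have hn0 : (n : ZMod p) ≠ 0 := fun h ↦
    hpn.ne ((Nat.prime_dvd_prime_iff_eq hp hn).1 ((ZMod.natCast_eq_zero_iff n p).1 h))
  rw [forbiddenClasses]
  split_ifs with h
  · simp only [mem_insert, mem_singleton, hn0, false_or]
    intro hinv
    have hmn : ((m * n - 1 : ℕ) : ZMod p) = 0 := by
      have hm' : (m : ZMod p) ≠ 0 := fun h0 ↦ hn0 (by rw [hinv, h0, inv_zero])
      rw [Nat.cast_sub (Nat.mul_pos (Nat.pos_of_ne_zero hm) hn.pos), Nat.cast_mul, hinv,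
        mul_inv_cancel₀ hm', Nat.cast_one, sub_self]
    exact hsift h.1 (fun hpM ↦ h.2 (hpM.mul_left _)) ((ZMod.natCast_eq_zero_iff _ p).1 hmn)
  · simpa using hn0

lemma inv_sieveMass_forbiddenClasses_le (hm : m ≠ 0) (hM : M ≠ 0) (hK : 1 ≤ K) (hK' : 1 ≤ K') :
    (sieveMass (forbiddenClasses m M K') (K * K'))⁻¹ ≤
      12 * dedekindPsiRatio m * dedekindPsiRatio M /
        (Real.log (K + 1) * Real.log (K' + 1)) := by
  set L := sieveMass (forbiddenClasses m M K') (K * K')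
  have hL : 1 ≤ L := one_le_sieveMass (fun p ↦ card_forbiddenClasses_lt) (Nat.mul_pos hK hK')
  have hlogK : 0 < Real.log (K + 1) := Real.log_pos (by simpa using Nat.zero_lt_of_lt hK)
  have hlogK' : 0 < Real.log (K' + 1) := Real.log_pos (by simpa using Nat.zero_lt_of_lt hK')
  have hψM := (dedekindPsiRatio_pos M).le
  have hψ : dedekindPsiRatio (2 * m * M) ≤ 3 / 2 * dedekindPsiRatio m * dedekindPsiRatio M :=
    calc dedekindPsiRatio (2 * m * M)
        ≤ dedekindPsiRatio (2 * m) * dedekindPsiRatio M := dedekindPsiRatio_mul_le (by lia) hM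
      _ ≤ dedekindPsiRatio 2 * dedekindPsiRatio m * dedekindPsiRatio M := by
          gcongr
          exact dedekindPsiRatio_mul_le two_ne_zero hm
      _ = 3 / 2 * dedekindPsiRatio m * dedekindPsiRatio M := by rw [dedekindPsiRatio_two]
  rw [inv_eq_one_div, div_le_div_iff₀ (by positivity) (by positivity), one_mul]
  calc Real.log (K + 1) * Real.log (K' + 1)
      ≤ 8 * dedekindPsiRatio (2 * m * M) * L :=
        log_mul_log_le_mul_sieveMass (fun p _ ↦ one_le_card_forbiddenClasses p)
          (fun p ↦ card_forbiddenClasses_lt) K (by positivity)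
          fun p ↦ two_le_card_forbiddenClasses
    _ ≤ 8 * (3 / 2 * dedekindPsiRatio m * dedekindPsiRatio M) * L := by gcongr
    _ = 12 * dedekindPsiRatio m * dedekindPsiRatio M * L := by ring

lemma card_sifted_primes_le (hm : m ≠ 0) (hM : M ≠ 0) (hK : 1 ≤ K) (hK' : 1 ≤ K') {X : ℝ}
    (hX : 0 ≤ X) {A : Finset ℕ} (hAX : ∀ n ∈ A, (n : ℝ) ≤ X) (hAK : ∀ n ∈ A, K * K' < n)
    (hprime : ∀ n ∈ A, n.Prime)
    (hsift : ∀ n ∈ A, ∀ p, p.Prime → p ≤ K' → ¬p ∣ M → ¬p ∣ m * n - 1) :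
    #A ≤ X * (12 * dedekindPsiRatio m * dedekindPsiRatio M /
        (Real.log (K + 1) * Real.log (K' + 1))) + (1 + 2 * ((K * K' : ℕ) : ℝ) ^ 6) := by
  set L := sieveMass (forbiddenClasses m M K') (K * K')
  have hL : 1 ≤ L := one_le_sieveMass (fun p ↦ card_forbiddenClasses_lt) (Nat.mul_pos hK hK')
  have hselberg : #A * L ^ 2 ≤ (⌊X⌋₊ + 1 : ℕ) * L + 2 * ((K * K' : ℕ) : ℝ) ^ 6 :=
    card_mul_sieveMass_sq_le (fun p ↦ card_forbiddenClasses_lt)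
      (fun n hn ↦ Nat.lt_succ_of_le (Nat.le_floor (hAX n hn))) fun n hn p hp hpK ↦
        natCast_notMem_forbiddenClasses hm (hprime n hn) hp (hpK.trans_lt (hAK n hn))
          (hsift n hn p hp)
  calc (#A : ℝ) ≤ ((⌊X⌋₊ + 1 : ℕ) * L + 2 * ((K * K' : ℕ) : ℝ) ^ 6) / L ^ 2 := by
        rwa [le_div_iff₀ (by positivity)]
    _ = ⌊X⌋₊ * L⁻¹ + (L⁻¹ + 2 * ((K * K' : ℕ) : ℝ) ^ 6 / L ^ 2) := by
        push_cast
        field_simp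
        ring
    _ ≤ X * (12 * dedekindPsiRatio m * dedekindPsiRatio M /
          (Real.log (K + 1) * Real.log (K' + 1))) + (1 + 2 * ((K * K' : ℕ) : ℝ) ^ 6) := by
        gcongr
        · exact Nat.floor_le hX
        · exact inv_sieveMass_forbiddenClasses_le hm hM hK hK'
        · exact inv_le_one_of_one_le₀ hL
        · exact div_le_self (by positivity) (one_le_pow₀ hL)

end SiftedPrimes

section SieveRange

open Finset

/-- The inequalities between `x` and the parameters `y = yy ε x`, `z = zz x` under which the sieve
of level `x ^ (1 / 20)` applies to the sets `R_m`; they hold for all large `x`. -/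
structure SieveRange (ε x : ℝ) : Prop where
  one_le : 1 ≤ x
  one_le_log_log : 1 ≤ Real.log^[2] x
  log_log_log_pos : 0 < Real.log^[3] x
  yy_le : yy ε x ≤ x ^ ((1 : ℝ) / 40)
  le_zz : x ^ ((1 : ℝ) / 20) ≤ zz x

variable {CU ε x : ℝ} {M m : ℕ}

lemma card_RmM_le {K K' : ℕ} (hm : m ≠ 0) (hM : M ≠ 0) (hK : 1 ≤ K) (hK' : 1 ≤ K')
    (hKy : (K' : ℝ) ≤ yy ε x) (hKz : ((K * K' : ℕ) : ℝ) ≤ zz x) (hU : 0 ≤ UU CU M ε x) :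
    (#(RmM CU ε x M m) : ℝ) ≤
      UU CU M ε x / m * (12 * dedekindPsiRatio m * dedekindPsiRatio M /
        (Real.log (K + 1) * Real.log (K' + 1))) + (1 + 2 * ((K * K' : ℕ) : ℝ) ^ 6) := by
  have hX : 0 ≤ UU CU M ε x / m := by positivity
  have hmem : ∀ n ∈ RmM CU ε x M m, n ≤ ⌊UU CU M ε x / m⌋₊ ∧ n.Prime ∧ zz x < n ∧
      (m * n - 1).Coprime (PM M (yy ε x)) := fun n hn ↦ by
    simpa only [RmM, mem_filter, mem_range, Nat.lt_succ_iff] using hn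
  refine card_sifted_primes_le hm hM hK hK' hX (fun n hn ↦ (Nat.le_floor_iff hX).1 (hmem n hn).1)
    (fun n hn ↦ Nat.cast_lt.1 (hKz.trans_lt (hmem n hn).2.2.1)) (fun n hn ↦ (hmem n hn).2.1)
    fun n hn p hp hpK hpM hpn ↦ ?_
  have hpP : p ∣ PM M (yy ε x) := dvd_prod_of_mem _ <|
    mem_filter.2 ⟨mem_range_succ_iff.2 (hpK.trans (Nat.le_floor hKy)), hp, hpM⟩
  exact Nat.not_coprime_of_dvd_of_dvd hp.one_lt hpn hpP (hmem n hn).2.2.2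

namespace SieveRange

lemma pos (h : SieveRange ε x) : 0 < x := zero_lt_one.trans_le h.one_le

lemma log_log_pos (h : SieveRange ε x) : 0 < Real.log^[2] x :=
  zero_lt_one.trans_le h.one_le_log_log

lemma one_le_log (h : SieveRange ε x) : 1 ≤ Real.log x :=
  h.one_le_log_log.trans (Real.log_le_self (Real.log_nonneg h.one_le))

lemma log_pos (h : SieveRange ε x) : 0 < Real.log x := zero_lt_one.trans_le h.one_le_log

lemma zz_pos (h : SieveRange ε x) : 0 < zz x := div_pos h.pos h.log_log_pos

lemma log_yy_pos (h : SieveRange ε x) (hε : ε < 1) : 0 < Real.log (yy ε x) := by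
  rw [yy, Real.log_exp]
  exact div_pos (mul_pos (mul_pos (sub_pos.2 hε) h.log_pos) h.log_log_log_pos) h.log_log_pos

lemma one_le_yy (h : SieveRange ε x) (hε : ε < 1) : 1 ≤ yy ε x :=
  ((Real.log_pos_iff (Real.exp_pos _).le).1 (h.log_yy_pos hε)).le

lemma log_yy_le_log (h : SieveRange ε x) : Real.log (yy ε x) ≤ Real.log x :=
  Real.log_le_log (Real.exp_pos _) <|
    h.yy_le.trans (Real.rpow_le_self_of_one_le h.one_le (by norm_num))

lemma UU_pos (h : SieveRange ε x) (hε : ε < 1) (hCU : 0 < CU) (hM : M ≠ 0) :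
    0 < UU CU M ε x := by
  have : (0 : ℝ) < M.totient := mod_cast Nat.totient_pos.2 (Nat.pos_of_ne_zero hM)
  have := h.pos
  have := h.log_log_pos
  have := h.log_yy_pos hε
  unfold UU
  positivity

lemma UU_div_zz_le (h : SieveRange ε x) (hε : ε < 1) (hCU : 0 < CU) :
    UU CU M ε x / zz x ≤ CU * Real.log x := by
  have hx := h.pos
  have hxlog := h.log_log_pos
  have hlogy := h.log_yy_pos hε
  have hle := h.log_yy_le_log
  have hφ : (M.totient : ℝ) / M ≤ 1 := div_le_one_of_le₀ (mod_cast M.totient_le) M.cast_nonneg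
  calc UU CU M ε x / zz x = CU * (M.totient / M) * Real.log (yy ε x) := by
        rw [UU, zz]
        field_simp
    _ ≤ CU * 1 * Real.log x := by gcongr
    _ = CU * Real.log x := by rw [mul_one]

lemma UU_div_zz_mul_sq_le (h : SieveRange ε x) (hε : ε < 1) (hCU : 0 < CU) (hM : M ≠ 0) :
    UU CU M ε x / (zz x * (Real.log^[2] x) ^ 2) ≤ UU CU M ε x / zz x :=
  div_le_div_of_nonneg_left (h.UU_pos hε hCU hM).le h.zz_pos <|
    le_mul_of_one_le_right h.zz_pos.le (one_le_pow₀ h.one_le_log_log)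

lemma UU_mul_dedekindPsiRatio_le (h : SieveRange ε x) (hε : ε < 1) (hCU : 0 < CU) :
    UU CU M ε x * dedekindPsiRatio M ≤ CU * x * Real.log (yy ε x) / Real.log^[2] x := by
  have hx := h.pos
  have hxlog := h.log_log_pos
  have hlogy := h.log_yy_pos hε
  calc UU CU M ε x * dedekindPsiRatio M
      = CU * x * Real.log (yy ε x) / Real.log^[2] x *
          (dedekindPsiRatio M * (M.totient / M)) := by
        rw [UU]
        ring
    _ ≤ CU * x * Real.log (yy ε x) / Real.log^[2] x * 1 := by
        gcongr
        exact dedekindPsiRatio_mul_totient_div_le_one M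
    _ = CU * x * Real.log (yy ε x) / Real.log^[2] x := mul_one _

lemma floor_mul_floor_le (h : SieveRange ε x) :
    ((⌊x ^ ((1 : ℝ) / 40)⌋₊ * ⌊yy ε x⌋₊ : ℕ) : ℝ) ≤ x ^ ((1 : ℝ) / 20) := by
  have hx := h.pos
  push_cast
  calc (⌊x ^ ((1 : ℝ) / 40)⌋₊ : ℝ) * ⌊yy ε x⌋₊ ≤ x ^ ((1 : ℝ) / 40) * x ^ ((1 : ℝ) / 40) := by
        gcongr
        · exact Nat.floor_le (by positivity)
        · exact (Nat.floor_le (Real.exp_pos _).le).trans h.yy_le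
    _ = x ^ ((1 : ℝ) / 20) := by
        rw [← Real.rpow_add hx]
        norm_num

lemma floor_mul_floor_pow_six_le (h : SieveRange ε x) :
    ((⌊x ^ ((1 : ℝ) / 40)⌋₊ * ⌊yy ε x⌋₊ : ℕ) : ℝ) ^ 6 ≤ x ^ ((3 : ℝ) / 10) :=
  calc ((⌊x ^ ((1 : ℝ) / 40)⌋₊ * ⌊yy ε x⌋₊ : ℕ) : ℝ) ^ 6 ≤ (x ^ ((1 : ℝ) / 20)) ^ 6 := by
        gcongr
        exact h.floor_mul_floor_le
    _ = x ^ ((3 : ℝ) / 10) := by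
        rw [← Real.rpow_mul_natCast h.pos.le]
        norm_num

lemma log_div_forty_le_log_floor_add_one (h : SieveRange ε x) :
    Real.log x / 40 ≤ Real.log (⌊x ^ ((1 : ℝ) / 40)⌋₊ + 1) := by
  have hx := h.pos
  calc Real.log x / 40 = Real.log (x ^ ((1 : ℝ) / 40)) := by
        rw [Real.log_rpow hx]
        ring
    _ ≤ Real.log (⌊x ^ ((1 : ℝ) / 40)⌋₊ + 1) :=
        Real.log_le_log (by positivity) (Nat.lt_floor_add_one _).le

/-- The sieve is applied with `K = x ^ (1 / 40)` and `K' = y`, so that the factor `log y` of `U`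
cancels against `log K'`. -/
lemma card_RmM_le (h : SieveRange ε x) (hε : ε < 1) (hCU : 0 < CU) (hM : M ≠ 0) (hm : m ≠ 0) :
    (#(RmM CU ε x M m) : ℝ) ≤
      480 * CU * x / (Real.log x * Real.log^[2] x) * (dedekindPsiRatio m / m) +
        (1 + 2 * x ^ ((3 : ℝ) / 10)) := by
  have hx := h.pos
  have hlog := h.log_pos
  have hloglog := h.log_log_pos
  have hlogy := h.log_yy_pos hε
  have hψ := dedekindPsiRatio_pos m
  set K := ⌊x ^ ((1 : ℝ) / 40)⌋₊
  set K' := ⌊yy ε x⌋₊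
  have hK : 1 ≤ K := Nat.le_floor (by simpa using Real.one_le_rpow h.one_le (by norm_num))
  have hK' : 1 ≤ K' := Nat.le_floor (by simpa using h.one_le_yy hε)
  have hlogK : Real.log x / 40 ≤ Real.log (K + 1) := h.log_div_forty_le_log_floor_add_one
  have hlogK0 : 0 ≤ Real.log (K + 1) := Real.log_nonneg (by simp)
  have hlogK' : Real.log (yy ε x) ≤ Real.log (K' + 1) :=
    Real.log_le_log (Real.exp_pos _) (Nat.lt_floor_add_one _).le
  have hlevel : ((K * K' : ℕ) : ℝ) ^ 6 ≤ x ^ ((3 : ℝ) / 10) := h.floor_mul_floor_pow_six_le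
  calc (#(RmM CU ε x M m) : ℝ)
      ≤ UU CU M ε x / m * (12 * dedekindPsiRatio m * dedekindPsiRatio M /
          (Real.log (K + 1) * Real.log (K' + 1))) + (1 + 2 * ((K * K' : ℕ) : ℝ) ^ 6) :=
        _root_.card_RmM_le hm hM hK hK' (Nat.floor_le (Real.exp_pos _).le)
          (h.floor_mul_floor_le.trans h.le_zz) (h.UU_pos hε hCU hM).le
    _ = 12 * (UU CU M ε x * dedekindPsiRatio M) / (Real.log (K + 1) * Real.log (K' + 1)) *
          (dedekindPsiRatio m / m) + (1 + 2 * ((K * K' : ℕ) : ℝ) ^ 6) := by ring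
    _ ≤ 12 * (CU * x * Real.log (yy ε x) / Real.log^[2] x) /
          (Real.log x / 40 * Real.log (yy ε x)) * (dedekindPsiRatio m / m) +
          (1 + 2 * x ^ ((3 : ℝ) / 10)) := by
        gcongr
        exact h.UU_mul_dedekindPsiRatio_le hε hCU
    _ = 480 * CU * x / (Real.log x * Real.log^[2] x) * (dedekindPsiRatio m / m) +
          (1 + 2 * x ^ ((3 : ℝ) / 10)) := by
        field_simp
        ring

lemma sum_card_RmM_le (h : SieveRange ε x) (hε : ε < 1) (hCU : 0 < CU) (hM : M ≠ 0)
    {I : Finset ℕ} {a b : ℝ} (ha : 0 < a) (hab : a ≤ b) (hI : ∀ m ∈ I, a ≤ m ∧ (m : ℝ) < b)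
    (hIU : ∀ m ∈ I, (m : ℝ) ≤ UU CU M ε x / zz x) :
    ∑ m ∈ I, (#(RmM CU ε x M m) : ℝ) ≤
      CU * (x / Real.log x * (960 * (1 + Real.log (b / a)) / Real.log^[2] x) +
        Real.log x * (1 + 2 * x ^ ((3 : ℝ) / 10))) := by
  have hx := h.pos
  have hlog := h.log_pos
  have hloglog := h.log_log_pos
  have hI0 : ∀ m ∈ I, m ≠ 0 := fun m hm ↦
    Nat.cast_ne_zero.1 (ha.trans_le (hI m hm).1).ne'
  have hcard : (#I : ℝ) ≤ CU * Real.log x := by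
    have hsub : I ⊆ Icc 1 ⌊UU CU M ε x / zz x⌋₊ := fun m hm ↦
      mem_Icc.2 ⟨Nat.one_le_iff_ne_zero.2 (hI0 m hm), Nat.le_floor (hIU m hm)⟩
    calc (#I : ℝ) ≤ ⌊UU CU M ε x / zz x⌋₊ := mod_cast (card_le_card hsub).trans (by simp)
      _ ≤ UU CU M ε x / zz x := Nat.floor_le (div_pos (h.UU_pos hε hCU hM) h.zz_pos).le
      _ ≤ CU * Real.log x := h.UU_div_zz_le hε hCU
  calc ∑ m ∈ I, (#(RmM CU ε x M m) : ℝ)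
      ≤ ∑ m ∈ I, (480 * CU * x / (Real.log x * Real.log^[2] x) * (dedekindPsiRatio m / m) +
          (1 + 2 * x ^ ((3 : ℝ) / 10))) :=
        sum_le_sum fun m hm ↦ h.card_RmM_le hε hCU hM (hI0 m hm)
    _ = 480 * CU * x / (Real.log x * Real.log^[2] x) * ∑ m ∈ I, dedekindPsiRatio m / m +
          #I * (1 + 2 * x ^ ((3 : ℝ) / 10)) := by
        rw [sum_add_distrib, ← mul_sum, sum_const, nsmul_eq_mul]
    _ ≤ 480 * CU * x / (Real.log x * Real.log^[2] x) * (2 * (1 + Real.log (b / a))) +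
          CU * Real.log x * (1 + 2 * x ^ ((3 : ℝ) / 10)) := by
        gcongr
        exact sum_dedekindPsiRatio_div_le ha hab hI
    _ = CU * (x / Real.log x * (960 * (1 + Real.log (b / a)) / Real.log^[2] x) +
          Real.log x * (1 + 2 * x ^ ((3 : ℝ) / 10))) := by ring

end SieveRange

end SieveRange

section Asymptotics

open Filter

lemma eventually_one_add_two_mul_log_le {c : ℝ} (hc : 0 < c) :
    ∀ᶠ t in atTop, 1 + 2 * Real.log t ≤ c * t := by
  have hlog : (fun t ↦ 1 + 2 * Real.log t) =o[atTop] (fun t : ℝ ↦ t) :=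
    (Asymptotics.isLittleO_const_id_atTop 1).add (Real.isLittleO_log_id_atTop.const_mul_left 2)
  filter_upwards [hlog.bound hc, eventually_ge_atTop 0] with t ht ht0
  simpa only [Real.norm_of_nonneg ht0] using (Real.le_norm_self _).trans ht

lemma eventually_log_mul_one_add_rpow_le {c : ℝ} (hc : 0 < c) :
    ∀ᶠ x in atTop, Real.log x * (1 + 2 * x ^ ((3 : ℝ) / 10)) ≤ c * (x / Real.log x) := by
  filter_upwards [eventually_gt_atTop 1,
    (isLittleO_log_rpow_atTop (show (0 : ℝ) < 1 / 10 by norm_num)).bound one_pos,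
    (tendsto_rpow_atTop (show (0 : ℝ) < 1 / 2 by norm_num)).eventually_ge_atTop (3 / c)]
    with x hx hlog hsqrt
  have hx0 : 0 < x := zero_lt_one.trans hx
  have hlog0 : 0 < Real.log x := Real.log_pos hx
  have hone : 1 ≤ x ^ ((3 : ℝ) / 10) := Real.one_le_rpow hx.le (by norm_num)
  rw [one_mul, Real.norm_of_nonneg hlog0.le, Real.norm_of_nonneg (by positivity)] at hlog
  rw [div_le_iff₀' hc] at hsqrt
  rw [← mul_div_assoc, le_div_iff₀ hlog0]
  calc Real.log x * (1 + 2 * x ^ ((3 : ℝ) / 10)) * Real.log x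
      ≤ x ^ ((1 : ℝ) / 10) * (3 * x ^ ((3 : ℝ) / 10)) * x ^ ((1 : ℝ) / 10) := by
        gcongr
        linarith
    _ = 3 * (x ^ ((1 : ℝ) / 10) * x ^ ((3 : ℝ) / 10) * x ^ ((1 : ℝ) / 10)) := by ring
    _ = 3 * x ^ ((1 : ℝ) / 2) := by
        rw [← Real.rpow_add hx0, ← Real.rpow_add hx0]
        norm_num
    _ ≤ c * x ^ ((1 : ℝ) / 2) * x ^ ((1 : ℝ) / 2) := by gcongr
    _ = c * x := by
        rw [mul_assoc, ← Real.rpow_add hx0]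
        norm_num

lemma tendsto_iterate_log_atTop (k : ℕ) : Tendsto (Real.log^[k]) atTop atTop :=
  Real.tendsto_log_atTop.iterate k

lemma eventually_yy_le_rpow (ε : ℝ) {δ : ℝ} (hδ : 0 < δ) : ∀ᶠ x in atTop, yy ε x ≤ x ^ δ := by
  have hlog : (fun x ↦ (1 - ε) * Real.log^[3] x) =o[atTop] Real.log^[2] :=
    (Real.isLittleO_log_id_atTop.comp_tendsto (tendsto_iterate_log_atTop 2)).const_mul_left _
  filter_upwards [hlog.bound hδ, eventually_gt_atTop 1,
    (tendsto_iterate_log_atTop 2).eventually_gt_atTop 0] with x hx hx1 hloglog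
  rw [Real.norm_of_nonneg hloglog.le] at hx
  have hlog0 : 0 < Real.log x := Real.log_pos hx1
  rw [Real.rpow_def_of_pos (zero_lt_one.trans hx1), yy, Real.exp_le_exp, div_le_iff₀ hloglog]
  calc (1 - ε) * Real.log x * Real.log^[3] x = Real.log x * ((1 - ε) * Real.log^[3] x) := by ring
    _ ≤ Real.log x * (δ * Real.log^[2] x) :=
        mul_le_mul_of_nonneg_left ((Real.le_norm_self _).trans hx) hlog0.le
    _ = Real.log x * δ * Real.log^[2] x := by ring

lemma eventually_rpow_le_zz {δ : ℝ} (hδ : δ < 1) : ∀ᶠ x in atTop, x ^ δ ≤ zz x := by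
  filter_upwards [eventually_gt_atTop 1,
    (isLittleO_log_rpow_atTop (sub_pos.2 hδ)).bound one_pos,
    (tendsto_iterate_log_atTop 2).eventually_gt_atTop 0] with x hx hlog hloglog
  have hx0 : 0 < x := zero_lt_one.trans hx
  have hlog0 : 0 < Real.log x := Real.log_pos hx
  rw [one_mul, Real.norm_of_nonneg hlog0.le, Real.norm_of_nonneg (by positivity)] at hlog
  rw [zz, le_div_iff₀ hloglog]
  calc x ^ δ * Real.log^[2] x ≤ x ^ δ * x ^ (1 - δ) := by
        gcongr
        exact (Real.log_le_self hlog0.le).trans hlog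
    _ = x := by
        rw [← Real.rpow_add hx0]
        norm_num

lemma eventually_sieveRange (ε : ℝ) : ∀ᶠ x in atTop, SieveRange ε x := by
  filter_upwards [eventually_ge_atTop 1, (tendsto_iterate_log_atTop 2).eventually_ge_atTop 1,
    (tendsto_iterate_log_atTop 3).eventually_gt_atTop 0,
    eventually_yy_le_rpow ε (show (0 : ℝ) < 1 / 40 by norm_num),
    eventually_rpow_le_zz (show (1 : ℝ) / 20 < 1 by norm_num)] with x hx hloglog hlog₃ hyy hzz
  exact ⟨hx, hloglog, hlog₃, hyy, hzz⟩

end Asymptotics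

section MainTheorem

open Filter Finset

variable {ε CU : ℝ}

lemma eventually_sum_card_RmM_upper_range_le (hε : ε < 1) (hCU : 0 < CU) {η : ℝ} (hη : 0 < η) :
    ∀ᶠ x in atTop, ∀ M : ℕ, 1 ≤ M →
      ∑ m ∈ (range (⌊UU CU M ε x / zz x⌋₊ + 1)).filter (fun m : ℕ ↦
          UU CU M ε x / (zz x * (Real.log^[2] x) ^ 2) ≤ (m : ℝ) ∧ (m : ℝ) < UU CU M ε x / zz x),
        (#(RmM CU ε x M m) : ℝ) ≤ η * CU * x / Real.log x := by
  filter_upwards [eventually_sieveRange ε, eventually_log_mul_one_add_rpow_le (half_pos hη),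
    (tendsto_iterate_log_atTop 2).eventually
      (eventually_one_add_two_mul_log_le (show 0 < η / 1920 by positivity))]
    with x h herror hmain M hM
  have hx := h.pos
  have hlog := h.log_pos
  have hloglog := h.log_log_pos
  have hz := h.zz_pos
  have hM0 := Nat.one_le_iff_ne_zero.1 hM
  have hU := h.UU_pos hε hCU hM0
  have hratio : UU CU M ε x / zz x / (UU CU M ε x / (zz x * (Real.log^[2] x) ^ 2)) =
      (Real.log^[2] x) ^ 2 := by field_simp
  refine le_trans (h.sum_card_RmM_le hε hCU hM0 (by positivity)
    (h.UU_div_zz_mul_sq_le hε hCU hM0) (fun m hm ↦ (mem_filter.1 hm).2)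
    fun m hm ↦ (mem_filter.1 hm).2.2.le) ?_
  rw [hratio, Real.log_pow, Nat.cast_ofNat]
  calc CU * (x / Real.log x * (960 * (1 + 2 * Real.log (Real.log^[2] x)) / Real.log^[2] x) +
        Real.log x * (1 + 2 * x ^ ((3 : ℝ) / 10)))
      ≤ CU * (x / Real.log x * (960 * (η / 1920 * Real.log^[2] x) / Real.log^[2] x) +
        η / 2 * (x / Real.log x)) := by gcongr
    _ = η * CU * x / Real.log x := by
        field_simp
        ring

lemma eventually_sum_card_RmM_lower_range_le (hε : ε < 1) (hCU : 0 < CU) :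
    ∀ᶠ x in atTop, ∀ M : ℕ, 1 ≤ M →
      ∑ m ∈ (range (⌊UU CU M ε x / zz x⌋₊ + 1)).filter (fun m : ℕ ↦
          1 ≤ m ∧ (m : ℝ) < UU CU M ε x / (zz x * (Real.log^[2] x) ^ 2)),
        (#(RmM CU ε x M m) : ℝ) ≤ 3000 * CU * x / Real.log x := by
  filter_upwards [eventually_sieveRange ε,
    eventually_log_mul_one_add_rpow_le (show (0 : ℝ) < 120 by norm_num),
    Real.tendsto_log_atTop.eventually_ge_atTop CU] with x h herror hCUx M hM
  have hx := h.pos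
  have hlog := h.log_pos
  have hloglog := h.log_log_pos
  have hM0 := Nat.one_le_iff_ne_zero.1 hM
  have hle := h.UU_div_zz_mul_sq_le hε hCU hM0
  have hUz : UU CU M ε x / zz x ≤ Real.log x ^ 2 :=
    calc UU CU M ε x / zz x ≤ CU * Real.log x := h.UU_div_zz_le hε hCU
      _ ≤ Real.log x ^ 2 := by
        rw [sq]
        gcongr
  have hmain : 1 + 2 * Real.log^[2] x ≤ 3 * Real.log^[2] x := by linarith [h.one_le_log_log]
  refine le_trans (h.sum_card_RmM_le hε hCU hM0 one_pos (one_le_pow₀ h.one_le_log)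
    (fun m hm ↦ ⟨Nat.one_le_cast.2 (mem_filter.1 hm).2.1,
      (mem_filter.1 hm).2.2.trans_le (hle.trans hUz)⟩)
    fun m hm ↦ ((mem_filter.1 hm).2.2.trans_le hle).le) ?_
  rw [div_one, Real.log_pow, Nat.cast_ofNat]
  calc CU * (x / Real.log x * (960 * (1 + 2 * Real.log^[2] x) / Real.log^[2] x) +
        Real.log x * (1 + 2 * x ^ ((3 : ℝ) / 10)))
      ≤ CU * (x / Real.log x * (960 * (3 * Real.log^[2] x) / Real.log^[2] x) +
        120 * (x / Real.log x)) := by gcongr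
    _ = 3000 * CU * x / Real.log x := by
        field_simp
        ring

theorem stmt6_general (hε : ε < 1) (hCU : 0 < CU) :
    (∀ η : ℝ, 0 < η → ∀ᶠ x in atTop, ∀ M : ℕ, 1 ≤ M →
      ∑ m ∈ (range (⌊UU CU M ε x / zz x⌋₊ + 1)).filter (fun m : ℕ ↦
          UU CU M ε x / (zz x * (Real.log^[2] x) ^ 2) ≤ (m : ℝ) ∧ (m : ℝ) < UU CU M ε x / zz x),
        (#(RmM CU ε x M m) : ℝ) ≤ η * CU * x / Real.log x) ∧
    ∀ᶠ x in atTop, ∀ M : ℕ, 1 ≤ M →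
      ∑ m ∈ (range (⌊UU CU M ε x / zz x⌋₊ + 1)).filter (fun m : ℕ ↦
          1 ≤ m ∧ (m : ℝ) < UU CU M ε x / (zz x * (Real.log^[2] x) ^ 2)),
        (#(RmM CU ε x M m) : ℝ) ≤ 3000 * CU * x / Real.log x :=
  ⟨fun _ hη ↦ eventually_sum_card_RmM_upper_range_le hε hCU hη,
    eventually_sum_card_RmM_lower_range_le hε hCU⟩

end MainTheorem

/-- (i) `∑_{U/(z(log₂x)²) ≤ m < U/z} |R_m^{(M)}| = o(C_U·x/log x)`, and
(ii) `∑_{1 ≤ m < U/(z(log₂x)²)} |R_m^{(M)}| = O(C_U·x/log x)`. -/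
theorem stmt6 :
    ∀ ε : ℝ, 0 < ε → ε < 1 → ∀ CU : ℝ, 0 < CU →
    ∃ κ A : ℝ, 0 < κ ∧ 0 < A ∧
      (∀ η : ℝ, 0 < η → ∃ x₀ : ℝ, ∀ x : ℝ, x ≥ x₀ →
        ∀ M : ℕ, 1 ≤ M → (M : ℝ) ≤ κ * x ^ ((1 : ℝ) / 5) →
        (∑ m ∈ (Finset.range (⌊UU CU M ε x / zz x⌋₊ + 1)).filter (fun m : ℕ =>
            UU CU M ε x / (zz x * (Real.log^[2] x) ^ 2) ≤ (m : ℝ) ∧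
              (m : ℝ) < UU CU M ε x / zz x),
          ((RmM CU ε x M m).card : ℝ))
          ≤ η * CU * x / Real.log x) ∧
      (∃ x₀ : ℝ, ∀ x : ℝ, x ≥ x₀ →
        ∀ M : ℕ, 1 ≤ M → (M : ℝ) ≤ κ * x ^ ((1 : ℝ) / 5) →
        (∑ m ∈ (Finset.range (⌊UU CU M ε x / zz x⌋₊ + 1)).filter (fun m : ℕ =>
            1 ≤ m ∧ (m : ℝ) < UU CU M ε x / (zz x * (Real.log^[2] x) ^ 2)),
          ((RmM CU ε x M m).card : ℝ))
          ≤ A * CU * x / Real.log x) := by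
  intro ε _ hε CU hCU
  obtain ⟨hupper, hlower⟩ := stmt6_general hε hCU
  refine ⟨1, 3000, one_pos, by norm_num, fun η hη ↦ ?_, ?_⟩
  · exact (Filter.eventually_atTop.1 (hupper η hη)).imp fun _ h x hx M hM _ ↦ h x hx M hM
  · exact (Filter.eventually_atTop.1 hlower).imp fun _ h x hx M hM _ ↦ h x hx M hM
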